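/- Let Ω ⊆ ℂ be a domain (open connected set) and let f : Ω → ℂ be a non-constant holomorphic function on Ω. Then for every set A ⊆ Ω whose closure is a compact subset of Ω, dim_N A = dim_N f(A) (with the Euclidean metric). -/

import Mathlib

open Set Metric

/-- `S` is `D`-bounded with respect to the distance function `d`:
every two points of `S` are at distance at most `D`. -/
def IsBoundedBy {α : Type*} (d : α → α → ℝ) (S : Set α) (D : ℝ) : Prop :=
  ∀ x ∈ S, ∀ y ∈ S, d x y ≤ D

/-- The Nagata (Assouad–Nagata) dimension of the set `X ⊆ α` with respect to the
distance function `d`, as an element of `ℕ∞`: the infimum of all `n : ℕ` such that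
there is a constant `c > 0` so that for every `s > 0` the set `X` admits a cover by
subsets of diameter at most `c * s` such that every subset of `X` of diameter at
most `s` meets at most `n + 1` members of the cover. -/
noncomputable def nagataDimWith {α : Type*} (d : α → α → ℝ) (X : Set α) : ℕ∞ :=
  sInf {N : ℕ∞ | ∃ n : ℕ, N = (n : ℕ∞) ∧ ∃ c : ℝ, 0 < c ∧ ∀ s : ℝ, 0 < s →
    ∃ B : Set (Set α), (∀ b ∈ B, b ⊆ X) ∧ X ⊆ ⋃₀ B ∧
      (∀ b ∈ B, IsBoundedBy d b (c * s)) ∧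
      ∀ T ⊆ X, IsBoundedBy d T s → {b ∈ B | (T ∩ b).Nonempty}.encard ≤ (n : ℕ∞) + 1}

/-- The Nagata dimension of a subset of a metric space. -/
noncomputable def nagataDim {α : Type*} [PseudoMetricSpace α] (X : Set α) : ℕ∞ :=
  nagataDimWith dist X

/-- Coloured, labelled form of the Nagata property of order `n`. -/
def CP {α : Type} (n : ℕ) (d : α → α → ℝ) (X : Set α) : Prop :=
  ∃ c : ℝ, 0 < c ∧ ∀ s : ℝ, 0 < s → ∃ (L : Type) (κ : α → Fin (n + 1)) (l : α → L),
    (∀ x ∈ X, ∀ y ∈ X, κ x = κ y → d x y ≤ s → l x = l y) ∧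
    (∀ x ∈ X, ∀ y ∈ X, κ x = κ y → l x = l y → d x y ≤ c * s)

/-- The property in the definition of the Nagata dimension. -/
def NP {α : Type} (n : ℕ) (d : α → α → ℝ) (X : Set α) : Prop :=
  ∃ c : ℝ, 0 < c ∧ ∀ s : ℝ, 0 < s →
    ∃ B : Set (Set α), (∀ b ∈ B, b ⊆ X) ∧ X ⊆ ⋃₀ B ∧
      (∀ b ∈ B, IsBoundedBy d b (c * s)) ∧
      ∀ T ⊆ X, IsBoundedBy d T s → {b ∈ B | (T ∩ b).Nonempty}.encard ≤ (n : ℕ∞) + 1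

theorem CP.mono {α : Type} {n : ℕ} {d : α → α → ℝ} {X Y : Set α} (h : CP n d X)
    (hYX : Y ⊆ X) : CP n d Y := by
  obtain ⟨c, hc, H⟩ := h
  refine ⟨c, hc, fun s hs => ?_⟩
  obtain ⟨L, κ, l, h1, h2⟩ := H s hs
  exact ⟨L, κ, l, fun x hx y hy => h1 x (hYX hx) y (hYX hy),
    fun x hx y hy => h2 x (hYX hx) y (hYX hy)⟩

theorem CP.image_iff {α β : Type} {n : ℕ} [Nonempty α] {d : β → β → ℝ} {X : Set α} (f : α → β) :
    CP n d (f '' X) ↔ CP n (fun x y => d (f x) (f y)) X := by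
  constructor
  · rintro ⟨c, hc, H⟩
    refine ⟨c, hc, fun s hs => ?_⟩
    obtain ⟨L, κ, l, h1, h2⟩ := H s hs
    exact ⟨L, κ ∘ f, l ∘ f,
      fun x hx y hy => h1 _ (mem_image_of_mem f hx) _ (mem_image_of_mem f hy),
      fun x hx y hy => h2 _ (mem_image_of_mem f hx) _ (mem_image_of_mem f hy)⟩
  · rintro ⟨c, hc, H⟩
    refine ⟨c, hc, fun s hs => ?_⟩
    obtain ⟨L, κ, l, h1, h2⟩ := H s hs
    have hg : ∀ y : β, ∃ x : α, y ∈ f '' X → x ∈ X ∧ f x = y := by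
      intro y
      by_cases hy : y ∈ f '' X
      · obtain ⟨x, hx, rfl⟩ := hy
        exact ⟨x, fun _ => ⟨hx, rfl⟩⟩
      · exact ⟨Classical.arbitrary α, fun h => absurd h hy⟩
    choose g hg using hg
    refine ⟨L, κ ∘ g, l ∘ g, ?_, ?_⟩
    · intro x hx y hy hk hd
      refine h1 _ (hg x hx).1 _ (hg y hy).1 hk ?_
      simpa only [(hg x hx).2, (hg y hy).2] using hd
    · intro x hx y hy hk hd
      have := h2 _ (hg x hx).1 _ (hg y hy).1 hk hd
      simpa only [(hg x hx).2, (hg y hy).2] using this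

theorem CP.subsingleton {α : Type} [PseudoMetricSpace α] {n : ℕ} {X : Set α}
    (hX : X.Subsingleton) : CP n dist X := by
  refine ⟨1, one_pos, fun s hs => ⟨Unit, fun _ => 0, fun _ => (), fun _ _ _ _ _ _ => rfl, ?_⟩⟩
  intro x hx y hy _ _
  rw [hX hx hy, dist_self]
  linarith

theorem CP.union {α : Type} [PseudoMetricSpace α] {n : ℕ} {X Y : Set α}
    (hX : CP n dist X) (hY : CP n dist Y) : CP n dist (X ∪ Y) := by
  classical
  obtain ⟨cX, hcX, HX⟩ := hX
  obtain ⟨c, hc, HY⟩ := hY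
  refine ⟨2 * (1 + c) + cX * (2 + c), by positivity, fun s hs => ?_⟩
  obtain ⟨LX, κX, lX, hX1, hX2⟩ := HX ((2 + c) * s) (by positivity)
  obtain ⟨LY, κY, lY, hY1, hY2⟩ := HY s hs
  let N : Fin (n + 1) → LY → α → Prop := fun i l x =>
    x ∈ X ∧ κX x = i ∧ ∃ y ∈ Y, κY y = i ∧ lY y = l ∧ dist x y ≤ s
  let lab : Fin (n + 1) → LY → LX ⊕ LY := fun i l =>
    if h : ∃ x, N i l x then Sum.inl (lX h.choose) else Sum.inr l
  let κ : α → Fin (n + 1) := fun z => if z ∈ X then κX z else κY z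
  let l : α → LX ⊕ LY := fun z => if z ∈ X then Sum.inl (lX z) else lab (κY z) (lY z)
  have key : ∀ i l x, N i l x → lab i l = Sum.inl (lX x) := by
    intro i l x hx
    have h : ∃ x, N i l x := ⟨x, hx⟩
    have e : lab i l = Sum.inl (lX h.choose) := dif_pos h
    rw [e]
    obtain ⟨a1, a2, y, hy, a3, a4, a5⟩ := h.choose_spec
    obtain ⟨b1, b2, y', hy', b3, b4, b5⟩ := hx
    congr 1
    refine hX1 _ a1 _ b1 (a2.trans b2.symm) ?_
    have h3 := hY2 y hy y' hy' (a3.trans b3.symm) (a4.trans b4.symm)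
    have h4 := dist_triangle4 h.choose y y' x
    rw [dist_comm y' x] at h4
    linarith
  have cov : ∀ z ∈ X ∪ Y, ∀ m : LX, l z = Sum.inl m →
      ∃ x ∈ X, κX x = κ z ∧ lX x = m ∧ dist z x ≤ (1 + c) * s := by
    intro z hz m hm
    by_cases hzX : z ∈ X
    · refine ⟨z, hzX, by simp [κ, hzX], ?_, ?_⟩
      · simpa [l, hzX] using hm
      · rw [dist_self]; positivity
    · have hzY : z ∈ Y := hz.resolve_left hzX
      have hm' : lab (κY z) (lY z) = Sum.inl m := by simpa [l, hzX] using hm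
      by_cases h : ∃ x, N (κY z) (lY z) x
      · obtain ⟨x, hx⟩ := h
        rw [key _ _ x hx] at hm'
        obtain ⟨b1, b2, y', hy', b3, b4, b5⟩ := hx
        refine ⟨x, b1, by simp [κ, hzX, b2], Sum.inl.inj hm', ?_⟩
        have h3 := hY2 z hzY y' hy' b3.symm b4.symm
        have h4 := dist_triangle z y' x
        rw [dist_comm y' x] at h4
        linarith
      · have e : lab (κY z) (lY z) = Sum.inr (lY z) := dif_neg h
        rw [e] at hm'
        cases hm'
  refine ⟨LX ⊕ LY, κ, l, ?_, ?_⟩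
  · have mix : ∀ x ∈ X, ∀ y ∈ X ∪ Y, y ∉ X → κ x = κ y → dist x y ≤ s → l x = l y := by
      intro x hx y hy hyX hk hd
      have hyY : y ∈ Y := hy.resolve_left hyX
      have e1 : l x = Sum.inl (lX x) := if_pos hx
      have e2 : l y = lab (κY y) (lY y) := if_neg hyX
      have k1 : κ x = κX x := if_pos hx
      have k2 : κ y = κY y := if_neg hyX
      rw [e1, e2]
      exact (key _ _ x ⟨hx, by rw [← k1, ← k2, hk], y, hyY, rfl, rfl, hd⟩).symm
    intro x hx y hy hk hd
    by_cases hxX : x ∈ X <;> by_cases hyX : y ∈ X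
    · have e1 : l x = Sum.inl (lX x) := if_pos hxX
      have e2 : l y = Sum.inl (lX y) := if_pos hyX
      have k1 : κ x = κX x := if_pos hxX
      have k2 : κ y = κX y := if_pos hyX
      rw [e1, e2]
      congr 1
      refine hX1 x hxX y hyX (by rw [← k1, ← k2, hk]) ?_
      nlinarith
    · exact mix x hxX y hy hyX hk hd
    · exact (mix y hyX x hx hxX hk.symm (by rwa [dist_comm])).symm
    · have e1 : l x = lab (κY x) (lY x) := if_neg hxX
      have e2 : l y = lab (κY y) (lY y) := if_neg hyX
      have k1 : κ x = κY x := if_neg hxX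
      have k2 : κ y = κY y := if_neg hyX
      have k3 : κY x = κY y := by rw [← k1, ← k2, hk]
      rw [e1, e2, k3, hY1 x (hx.resolve_left hxX) y (hy.resolve_left hyX) k3 hd]
  · intro x hx y hy hk hl
    rcases hlx : l x with m | m
    · obtain ⟨x', a1, a2, a3, a4⟩ := cov x hx m hlx
      obtain ⟨y', b1, b2, b3, b4⟩ := cov y hy m (hl ▸ hlx)
      have h3 := hX2 x' a1 y' b1 (by rw [a2, b2, hk]) (a3.trans b3.symm)
      have h4 := dist_triangle4 x x' y' y
      rw [dist_comm y' y] at h4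
      linarith
    · have aux : ∀ z ∈ X ∪ Y, l z = Sum.inr m → z ∈ Y ∧ κ z = κY z ∧ lY z = m := by
        intro z hz hm
        have hzX : z ∉ X := by
          intro h
          have e : l z = Sum.inl (lX z) := if_pos h
          rw [e] at hm
          cases hm
        have e : l z = lab (κY z) (lY z) := if_neg hzX
        refine ⟨hz.resolve_left hzX, if_neg hzX, ?_⟩
        rw [e] at hm
        by_cases h : ∃ x, N (κY z) (lY z) x
        · obtain ⟨x, hx⟩ := h
          rw [key _ _ x hx] at hm
          cases hm
        · have e : lab (κY z) (lY z) = Sum.inr (lY z) := dif_neg h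
          rw [e] at hm
          exact Sum.inr.inj hm
      obtain ⟨a1, a2, a3⟩ := aux x hx hlx
      obtain ⟨b1, b2, b3⟩ := aux y hy (hl ▸ hlx)
      have h3 := hY2 x a1 y b1 (by rw [← a2, ← b2, hk]) (a3.trans b3.symm)
      have : 0 < (2 + c + cX * (2 + c)) * s := by positivity
      nlinarith

theorem CP.glue {α J : Type} {n : ℕ} {d d' : α → α → ℝ} {X : Set α} (j : α → J)
    (lam ρ : J → ℝ) (L : ℝ) (hL : 0 < L) (hlam : ∀ i, 0 < lam i)
    (h1 : ∀ x ∈ X, ∀ y ∈ X, j x = j y → d' x y ≤ L * (lam (j x) * d x y))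
    (h2 : ∀ x ∈ X, ∀ y ∈ X, j x = j y → lam (j x) * d x y ≤ L * d' x y)
    (h3 : ∀ x ∈ X, ∀ y ∈ X, j x ≠ j y → ρ (j x) ≤ L * d' x y)
    (h3' : ∀ x ∈ X, ∀ y ∈ X, j x ≠ j y → ρ (j y) ≤ L * d' x y)
    (h4 : ∀ x ∈ X, ∀ y ∈ X, d' x y ≤ L * max (ρ (j x)) (ρ (j y)))
    (h : CP n d X) : CP n d' X := by
  classical
  obtain ⟨c, hc, H⟩ := h
  refine ⟨L * L + c * (L * L), by positivity, fun s hs => ?_⟩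
  have H' : ∀ i : J, ∃ (M : Type) (κ : α → Fin (n + 1)) (l : α → M),
    (∀ x ∈ X, ∀ y ∈ X, κ x = κ y → d x y ≤ L * s / lam i → l x = l y) ∧
    (∀ x ∈ X, ∀ y ∈ X, κ x = κ y → l x = l y → d x y ≤ c * (L * s / lam i)) :=
    fun i => H (L * s / lam i) (by have := hlam i; positivity)
  choose M κ l k1 k2 using H'
  let K : α → Fin (n + 1) := fun x => if ρ (j x) ≤ L * s then 0 else κ (j x) x
  let Λ : α → Option (Σ i, M i) := fun x =>
    if ρ (j x) ≤ L * s then none else some ⟨j x, l (j x) x⟩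
  refine ⟨Option (Σ i, M i), K, Λ, ?_, ?_⟩
  · intro x hx y hy hk hd
    by_cases hj : j x = j y
    · by_cases hsm : ρ (j x) ≤ L * s
      · have hsm' : ρ (j y) ≤ L * s := hj ▸ hsm
        simp only [Λ, if_pos hsm, if_pos hsm']
      · have hsm' : ¬ ρ (j y) ≤ L * s := hj ▸ hsm
        simp only [K, if_neg hsm, if_neg hsm'] at hk
        simp only [Λ, if_neg hsm, if_neg hsm']
        have e : l (j x) x = l (j x) y := by
          refine k1 (j x) x hx y hy (by rw [hk, hj]) ?_
          rw [le_div_iff₀ (hlam _), mul_comm]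
          exact (h2 x hx y hy hj).trans (by gcongr)
        rw [e, hj]
    · have a := h3 x hx y hy hj
      have b := h3' x hx y hy hj
      have e : L * d' x y ≤ L * s := by gcongr
      simp only [Λ, if_pos (a.trans e), if_pos (b.trans e)]
  · intro x hx y hy hk hl
    by_cases hsm : ρ (j x) ≤ L * s <;> by_cases hsm' : ρ (j y) ≤ L * s
    · have := h4 x hx y hy
      have e : max (ρ (j x)) (ρ (j y)) ≤ L * s := max_le hsm hsm'
      have e2 : L * max (ρ (j x)) (ρ (j y)) ≤ L * (L * s) := by gcongr
      have : 0 < c * (L * L) * s := by positivity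
      nlinarith
    · simp [Λ, hsm, hsm'] at hl
    · simp [Λ, hsm, hsm'] at hl
    · simp only [Λ, if_neg hsm, if_neg hsm', Option.some.injEq, Sigma.mk.injEq] at hl
      simp only [K, if_neg hsm, if_neg hsm'] at hk
      obtain ⟨hj, hl⟩ := hl
      rw [← hj] at hk hl
      have e := k2 (j x) x hx y hy hk (eq_of_heq hl)
      have hp := hlam (j x)
      have e2 : lam (j x) * d x y ≤ c * (L * s) := by
        calc lam (j x) * d x y ≤ lam (j x) * (c * (L * s / lam (j x))) := by gcongr
          _ = c * (L * s) := by field_simp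
      have e3 := h1 x hx y hy hj
      have e4 : L * (lam (j x) * d x y) ≤ L * (c * (L * s)) := by gcongr
      have : 0 < (L * L) * s := by positivity
      nlinarith

theorem CP.toNP {α : Type} {n : ℕ} {d : α → α → ℝ} {X : Set α} (h : CP n d X) : NP n d X := by
  obtain ⟨c, hc, H⟩ := h
  refine ⟨c, hc, fun s hs => ?_⟩
  obtain ⟨L, κ, l, h1, h2⟩ := H s hs
  let P : Fin (n + 1) → L → Set α := fun i m => {x | x ∈ X ∧ κ x = i ∧ l x = m}
  refine ⟨{b | ∃ i m, b = P i m}, ?_, ?_, ?_, ?_⟩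
  · rintro b ⟨i, m, rfl⟩ x hx
    exact hx.1
  · intro x hx
    exact ⟨P (κ x) (l x), ⟨_, _, rfl⟩, hx, rfl, rfl⟩
  · rintro b ⟨i, m, rfl⟩ x hx y hy
    exact h2 x hx.1 y hy.1 (hx.2.1.trans hy.2.1.symm) (hx.2.2.trans hy.2.2.symm)
  · intro T hT hTs
    have hsub : {b ∈ {b | ∃ i m, b = P i m} | (T ∩ b).Nonempty} ⊆
        Set.range (fun i : Fin (n + 1) => ⋃₀ {b | ∃ m, b = P i m ∧ (T ∩ b).Nonempty}) := by
      rintro b ⟨⟨i, m, rfl⟩, x, hxT, hx⟩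
      refine ⟨i, ?_⟩
      apply Set.Subset.antisymm
      · rintro z ⟨b, ⟨m', rfl, y, hyT, hy⟩, hz⟩
        have e : l x = l y := h1 x hx.1 y hy.1 (hx.2.1.trans hy.2.1.symm) (hTs x hxT y hyT)
        have : m' = m := by rw [← hy.2.2, ← e, hx.2.2]
        rwa [← this]
      · intro z hz
        exact ⟨P i m, ⟨m, rfl, x, hxT, hx⟩, hz⟩
    refine (Set.encard_le_encard hsub).trans ?_
    rw [← Set.image_univ]
    refine (Set.encard_image_le _ _).trans ?_
    simp

theorem NP.toCP {α : Type} [PseudoMetricSpace α] {n : ℕ} {X : Set α} (h : NP n dist X) :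
    CP n dist X := by
  classical
  obtain ⟨c, hc, H⟩ := h
  refine ⟨(2 + 2 * c) * (n + 2), by positivity, fun t ht => ?_⟩
  -- scale
  obtain ⟨B, hBX, hcov, hbd, hmul⟩ := H (2 * ((n + 2) * t)) (by positivity)
  set r : ℝ := (n + 2) * t with hr
  have hr0 : 0 < r := by positivity
  let F : α → Set (Set α) := fun x => {b ∈ B | b.Nonempty ∧ infDist x b < r}
  have hF : ∀ x, (F x).encard ≤ (n : ℕ∞) + 1 := by
    intro x
    refine le_trans (Set.encard_le_encard ?_) (hmul (ball x r ∩ X) inter_subset_right ?_)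
    · rintro b ⟨hb, hbn, hlt⟩
      obtain ⟨y, hy, hxy⟩ := (infDist_lt_iff hbn).1 hlt
      exact ⟨hb, y, ⟨by rwa [mem_ball, dist_comm], hBX b hb hy⟩, hy⟩
    · rintro y ⟨hy, -⟩ z ⟨hz, -⟩
      have := dist_triangle_right y z x
      rw [mem_ball] at hy hz
      linarith
  have hFfin : ∀ x, (F x).Finite := fun x =>
    Set.finite_of_encard_le_coe (k := n + 1) (by exact_mod_cast hF x)
  have hFcard : ∀ x, (F x).ncard ≤ n + 1 := by
    intro x
    have := hF x
    rw [← (hFfin x).cast_ncard_eq] at this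
    exact_mod_cast this
  -- the gap
  have gap : ∀ x, ∃ i : ℕ, x ∈ X → 1 ≤ i ∧ i ≤ n + 1 ∧ ∀ b ∈ F x,
      infDist x b < i * t ∨ (i + 1) * t ≤ infDist x b := by
    intro x
    by_cases hx : x ∈ X
    swap
    · exact ⟨0, fun h => absurd h hx⟩
    let I : Finset ℕ := (hFfin x).toFinset.image (fun b => ⌊infDist x b / t⌋₊)
    have hI : I.card < (Finset.range (n + 2)).card := by
      rw [Finset.card_range]
      refine lt_of_le_of_lt Finset.card_image_le ?_
      rw [← Set.ncard_eq_toFinset_card _ (hFfin x)]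
      have := hFcard x
      omega
    obtain ⟨i, hi, hiI⟩ := Finset.exists_mem_notMem_of_card_lt_card hI
    have hno : ∀ b ∈ F x, ⌊infDist x b / t⌋₊ ≠ i := by
      intro b hb he
      exact hiI (Finset.mem_image.2 ⟨b, (hFfin x).mem_toFinset.2 hb, he⟩)
    refine ⟨i, fun _ => ⟨?_, ?_, ?_⟩⟩
    · obtain ⟨b, hb, hxb⟩ := hcov hx
      have h0 : infDist x b = 0 := infDist_zero_of_mem hxb
      have := hno b ⟨hb, ⟨x, hxb⟩, by rw [h0]; exact hr0⟩
      rw [h0] at this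
      simp at this
      omega
    · have := Finset.mem_range.1 hi
      omega
    · intro b hb
      have h := hno b hb
      rw [Ne, Nat.floor_eq_iff (div_nonneg infDist_nonneg ht.le)] at h
      by_contra! hcon
      apply h
      rw [le_div_iff₀ ht, div_lt_iff₀ ht]
      exact hcon
  choose i hi using gap
  let S : α → Set (Set α) := fun x => {b ∈ B | b.Nonempty ∧ infDist x b < i x * t}
  have hSF : ∀ x ∈ X, S x ⊆ F x := by
    rintro x hx b ⟨hb, hbn, hlt⟩
    refine ⟨hb, hbn, hlt.trans_le ?_⟩
    have h1 : (i x : ℝ) ≤ n + 1 := by exact_mod_cast (hi x hx).2.1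
    rw [hr]
    gcongr
    linarith
  have hSfin : ∀ x ∈ X, (S x).Finite := fun x hx => (hFfin x).subset (hSF x hx)
  have hSn : ∀ x ∈ X, ∀ b ∈ B, b.Nonempty → b ∉ S x → (i x + 1) * t ≤ infDist x b := by
    intro x hx b hb hbn hbS
    by_cases hbF : b ∈ F x
    · exact ((hi x hx).2.2 b hbF).resolve_left fun h => hbS ⟨hb, hbn, h⟩
    · have h2 : r ≤ infDist x b := by
        by_contra! h
        exact hbF ⟨hb, hbn, h⟩
      refine le_trans ?_ h2
      have h1 : (i x : ℝ) ≤ n + 1 := by exact_mod_cast (hi x hx).2.1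
      rw [hr]
      gcongr ?_ * t
      linarith
  have hSpos : ∀ x ∈ X, 0 < (S x).ncard := by
    intro x hx
    rw [Set.ncard_pos (hSfin x hx)]
    obtain ⟨b, hb, hxb⟩ := hcov hx
    refine ⟨b, hb, ⟨x, hxb⟩, ?_⟩
    rw [infDist_zero_of_mem hxb]
    have : (1 : ℝ) ≤ i x := by exact_mod_cast (hi x hx).1
    positivity
  have hSle : ∀ x ∈ X, (S x).ncard ≤ n + 1 := fun x hx =>
    (Set.ncard_le_ncard (hSF x hx) (hFfin x)).trans (hFcard x)
  refine ⟨Set (Set α), fun x => Fin.ofNat (n + 1) ((S x).ncard - 1), S, ?_, ?_⟩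
  · intro x hx y hy hk hd
    have hk' : (S x).ncard = (S y).ncard := by
      have a1 := hSpos x hx
      have a2 := hSpos y hy
      have a3 := hSle x hx
      have a4 := hSle y hy
      have := congrArg Fin.val hk
      simp only [Fin.ofNat] at this
      rw [Nat.mod_eq_of_lt (by omega), Nat.mod_eq_of_lt (by omega)] at this
      omega
    by_contra hne
    obtain ⟨b, hbx, hby⟩ : ∃ b ∈ S x, b ∉ S y := by
      by_contra! hcon
      exact hne (Set.eq_of_subset_of_ncard_le hcon hk'.ge (hSfin y hy))
    obtain ⟨b', hby', hbx'⟩ : ∃ b ∈ S y, b ∉ S x := by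
      by_contra! hcon
      exact hne (Set.eq_of_subset_of_ncard_le hcon hk'.le (hSfin x hx)).symm
    have e1 := hbx.2.2
    have e2 := hby'.2.2
    have e3 := hSn y hy b hbx.1 hbx.2.1 hby
    have e4 := hSn x hx b' hby'.1 hby'.2.1 hbx'
    have e5 : infDist y b ≤ infDist x b + dist y x := infDist_le_infDist_add_dist
    have e6 : infDist x b' ≤ infDist y b' + dist x y := infDist_le_infDist_add_dist
    rw [dist_comm y x] at e5
    linarith
  · intro x hx y hy _ hl
    obtain ⟨b, hb⟩ := (Set.ncard_pos (hSfin x hx)).1 (hSpos x hx)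
    have hb' : b ∈ S y := hl ▸ hb
    obtain ⟨x', hx', hxx⟩ := (infDist_lt_iff hb.2.1).1 (hSF x hx hb).2.2
    obtain ⟨y', hy', hyy⟩ := (infDist_lt_iff hb.2.1).1 (hSF y hy hb').2.2
    have e1 := hbd b hb.1 x' hx' y' hy'
    have e2 := dist_triangle4 x x' y' y
    rw [dist_comm y' y] at e2
    rw [hr] at *
    linarith

theorem nagataDim_eq_of_CP {α β : Type} [PseudoMetricSpace α] [PseudoMetricSpace β]
    {X : Set α} {Y : Set β} (h : ∀ n, CP n dist X ↔ CP n dist Y) :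
    nagataDim X = nagataDim Y := by
  have h' : ∀ n, NP n dist X ↔ NP n dist Y := fun n =>
    ⟨fun H => ((h n).1 H.toCP).toNP, fun H => ((h n).2 H.toCP).toNP⟩
  have e : {N : ℕ∞ | ∃ n : ℕ, N = (n : ℕ∞) ∧ NP n dist X} =
      {N : ℕ∞ | ∃ n : ℕ, N = (n : ℕ∞) ∧ NP n dist Y} := by
    ext N
    simp only [mem_ofPred_eq, h']
  exact congrArg sInf e

/-- `S` is good for `f` if `f` preserves the property `CP n` of all subsets of `S`. -/
def Good (n : ℕ) (f : ℂ → ℂ) (S : Set ℂ) : Prop :=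
  ∀ T ⊆ S, CP n dist T ↔ CP n dist (f '' T)

theorem Good.mono {n : ℕ} {f : ℂ → ℂ} {S T : Set ℂ} (h : Good n f S) (hT : T ⊆ S) :
    Good n f T := fun R hR => h R (hR.trans hT)

theorem Good.subsingleton {n : ℕ} {f : ℂ → ℂ} {S : Set ℂ} (h : S.Subsingleton) :
    Good n f S := fun _ hR =>
  ⟨fun _ => CP.subsingleton ((h.anti hR).image f), fun _ => CP.subsingleton (h.anti hR)⟩

theorem Good.union {n : ℕ} {f : ℂ → ℂ} {S T : Set ℂ} (hS : Good n f S) (hT : Good n f T) :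
    Good n f (S ∪ T) := by
  intro R hR
  have e : R = (R ∩ S) ∪ (R ∩ T) := by
    rw [← inter_union_distrib_left, inter_eq_left.2 hR]
  have h1 := hS (R ∩ S) inter_subset_right
  have h2 := hT (R ∩ T) inter_subset_right
  constructor
  · intro h
    rw [e, image_union]
    exact (h1.1 (h.mono inter_subset_left)).union (h2.1 (h.mono inter_subset_left))
  · intro h
    rw [e]
    exact (h1.2 (h.mono (image_mono inter_subset_left))).union
      (h2.2 (h.mono (image_mono inter_subset_left)))

theorem scale_sep {k : ℕ} (hk : k ≠ 0) {i j : ℤ} (hij : i ≠ j) {C m m' : ℂ}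
    (hm : ‖m - C‖ ≤ ‖C‖ / 8) (hm' : ‖m' - C‖ ≤ ‖C‖ / 8) :
    ((2 : ℝ) ^ i) ^ k * ‖C‖ ≤ 4 * ‖((2 : ℂ) ^ i) ^ k * m - ((2 : ℂ) ^ j) ^ k * m'‖ := by
  have a1 : ‖m‖ ≤ 9 / 8 * ‖C‖ := by
    have := norm_le_norm_add_norm_sub' m C
    linarith
  have a2 : 7 / 8 * ‖C‖ ≤ ‖m‖ := by
    have := norm_le_norm_add_norm_sub' C m
    rw [norm_sub_rev] at this
    linarith
  have b1 : ‖m'‖ ≤ 9 / 8 * ‖C‖ := by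
    have := norm_le_norm_add_norm_sub' m' C
    linarith
  have b2 : 7 / 8 * ‖C‖ ≤ ‖m'‖ := by
    have := norm_le_norm_add_norm_sub' C m'
    rw [norm_sub_rev] at this
    linarith
  have hC : 0 ≤ ‖C‖ := norm_nonneg _
  have n1 : ‖((2 : ℂ) ^ i) ^ k * m‖ = ((2 : ℝ) ^ i) ^ k * ‖m‖ := by simp
  have n2 : ‖((2 : ℂ) ^ j) ^ k * m'‖ = ((2 : ℝ) ^ j) ^ k * ‖m'‖ := by simp
  have dbl : ∀ i j : ℤ, i < j → 2 * ((2 : ℝ) ^ i) ^ k ≤ ((2 : ℝ) ^ j) ^ k := by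
    intro i j h
    have h1 : 2 * (2 : ℝ) ^ i ≤ (2 : ℝ) ^ j := by
      calc 2 * (2 : ℝ) ^ i = (2 : ℝ) ^ (i + 1) := by rw [zpow_add_one₀ (by norm_num)]; ring
        _ ≤ _ := zpow_le_zpow_right₀ (by norm_num) (by omega)
    calc 2 * ((2 : ℝ) ^ i) ^ k ≤ 2 ^ k * ((2 : ℝ) ^ i) ^ k := by
          gcongr
          exact le_self_pow₀ (by norm_num) hk
      _ = (2 * (2 : ℝ) ^ i) ^ k := by rw [mul_pow]
      _ ≤ _ := by gcongr
  have pi : 0 < ((2 : ℝ) ^ i) ^ k := by positivity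
  have pj : 0 < ((2 : ℝ) ^ j) ^ k := by positivity
  have A1 := mul_le_mul_of_nonneg_left a1 pi.le
  have A2 := mul_le_mul_of_nonneg_left a2 pi.le
  have B1 := mul_le_mul_of_nonneg_left b1 pj.le
  have B2 := mul_le_mul_of_nonneg_left b2 pj.le
  rcases lt_or_gt_of_ne hij with h | h
  · have h1 := norm_sub_norm_le (((2 : ℂ) ^ j) ^ k * m') (((2 : ℂ) ^ i) ^ k * m)
    rw [norm_sub_rev, n1, n2] at h1
    have h2 := mul_le_mul_of_nonneg_right (dbl i j h) hC
    nlinarith [mul_nonneg pi.le hC]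
  · have h1 := norm_sub_norm_le (((2 : ℂ) ^ i) ^ k * m) (((2 : ℂ) ^ j) ^ k * m')
    rw [n1, n2] at h1
    have h2 := mul_le_mul_of_nonneg_right (dbl j i h) hC
    nlinarith [mul_nonneg pi.le hC]

theorem scale_bdd {k : ℕ} {i j : ℤ} {C m m' : ℂ}
    (hm : ‖m - C‖ ≤ ‖C‖ / 8) (hm' : ‖m' - C‖ ≤ ‖C‖ / 8) :
    ‖((2 : ℂ) ^ i) ^ k * m - ((2 : ℂ) ^ j) ^ k * m'‖ ≤
      4 * max (((2 : ℝ) ^ i) ^ k * ‖C‖) (((2 : ℝ) ^ j) ^ k * ‖C‖) := by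
  have a1 : ‖m‖ ≤ 9 / 8 * ‖C‖ := by
    have := norm_le_norm_add_norm_sub' m C
    linarith
  have b1 : ‖m'‖ ≤ 9 / 8 * ‖C‖ := by
    have := norm_le_norm_add_norm_sub' m' C
    linarith
  have hC : 0 ≤ ‖C‖ := norm_nonneg _
  have n1 : ‖((2 : ℂ) ^ i) ^ k * m‖ = ((2 : ℝ) ^ i) ^ k * ‖m‖ := by simp
  have n2 : ‖((2 : ℂ) ^ j) ^ k * m'‖ = ((2 : ℝ) ^ j) ^ k * ‖m'‖ := by simp
  have pi : 0 < ((2 : ℝ) ^ i) ^ k := by positivity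
  have pj : 0 < ((2 : ℝ) ^ j) ^ k := by positivity
  have A1 := mul_le_mul_of_nonneg_left a1 pi.le
  have B1 := mul_le_mul_of_nonneg_left b1 pj.le
  have h1 := norm_sub_le (((2 : ℂ) ^ i) ^ k * m) (((2 : ℂ) ^ j) ^ k * m')
  rw [n1, n2] at h1
  have h2 := le_max_left (((2 : ℝ) ^ i) ^ k * ‖C‖) (((2 : ℝ) ^ j) ^ k * ‖C‖)
  have h3 := le_max_right (((2 : ℝ) ^ i) ^ k * ‖C‖) (((2 : ℝ) ^ j) ^ k * ‖C‖)
  have h4 := mul_nonneg pi.le hC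
  linarith

theorem ev_pair {u : ℂ} {p : ℂ × ℂ → Prop} (h : ∀ᶠ q in nhds (u, u), p q) :
    ∃ V ∈ nhds u, ∀ x ∈ V, ∀ y ∈ V, p (x, y) := by
  rw [nhds_prod_eq] at h
  obtain ⟨V, hV, hVp⟩ := Filter.mem_prod_same_iff.1 h
  exact ⟨V, hV, fun x hx y hy => hVp (mk_mem_prod hx hy)⟩

theorem core {n : ℕ} {f g : ℂ → ℂ} {z0 u : ℂ} {k : ℕ} (hk : k ≠ 0) (hg : AnalyticAt ℂ g z0)
    (hg0 : g z0 ≠ 0) (hfg : ∀ᶠ z in nhds z0, f z - f z0 = (z - z0) ^ k * g z) (hu : u ≠ 0) :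
    ∃ V ∈ nhds u, ∃ U ∈ nhds z0,
      Good n f {z | z ∈ U ∧ ∃ j : ℤ, ∃ v ∈ V, z - z0 = (2 : ℂ) ^ j * v} := by
  have hg0' : 0 < ‖g z0‖ := norm_pos_iff.2 hg0
  have hu' : 0 < ‖u‖ := norm_pos_iff.2 hu
  have hpow : HasStrictDerivAt (fun z : ℂ => z ^ k) ((k : ℂ) * u ^ (k - 1)) u :=
    hasStrictDerivAt_pow k u
  have hne : (k : ℂ) * u ^ (k - 1) ≠ 0 :=
    mul_ne_zero (Nat.cast_ne_zero.2 hk) (pow_ne_zero _ hu)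
  -- two-sided Lipschitz bounds for the power map
  obtain ⟨c1, hc1⟩ := hpow.hasStrictFDerivAt.isBigO_sub.bound
  obtain ⟨c2, hc2⟩ := (HasDerivAtFilter.isTheta_sub hpow hne).2.bound
  obtain ⟨c3, hc3⟩ := hg.hasStrictDerivAt.hasStrictFDerivAt.isBigO_sub.bound
  obtain ⟨V1, hV1, hc1⟩ := ev_pair hc1
  obtain ⟨V2, hV2, hc2⟩ := ev_pair hc2
  obtain ⟨U3, hU3, hc3⟩ := ev_pair hc3
  have hcont : ContinuousAt (fun p : ℂ × ℂ => p.1 ^ k * g p.2) (u, z0) := by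
    refine (continuousAt_fst.pow k).mul ?_
    exact ContinuousAt.comp (f := Prod.snd) (g := g) hg.continuousAt continuousAt_snd
  have hC : 0 < ‖u ^ k * g z0‖ := norm_pos_iff.2 (mul_ne_zero (pow_ne_zero _ hu) hg0)
  have hev : ∀ᶠ p in nhds (u, z0),
      ‖p.1 ^ k * g p.2 - u ^ k * g z0‖ ≤ ‖u ^ k * g z0‖ / 8 := by
    filter_upwards [hcont.eventually (closedBall_mem_nhds _ (by positivity : 0 < ‖u ^ k * g z0‖ / 8))]
      with p hp
    simpa [dist_eq_norm] using hp
  rw [nhds_prod_eq, Filter.eventually_prod_iff] at hev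
  obtain ⟨pV, hpV, pU, hpU, hprod⟩ := hev
  have hVu : ∀ᶠ a in nhds u, ‖a - u‖ ≤ ‖u‖ / 8 := by
    filter_upwards [closedBall_mem_nhds u (by positivity : 0 < ‖u‖ / 8)] with p hp
    simpa [dist_eq_norm] using hp
  have hUg : ∀ᶠ z in nhds z0, ‖g z - g z0‖ ≤ ‖g z0‖ / 2 := by
    filter_upwards [hg.continuousAt.eventually
      (closedBall_mem_nhds _ (by positivity : 0 < ‖g z0‖ / 2))] with p hp
    simpa [dist_eq_norm] using hp
  set L1 : ℝ := max 1 (max c1 c2) with hL1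
  set G : ℝ := max 1 c3 with hG
  have hL1' : 1 ≤ L1 := le_max_left _ _
  have hL1c1 : c1 ≤ L1 := (le_max_left _ _).trans (le_max_right _ _)
  have hL1c2 : c2 ≤ L1 := (le_max_right _ _).trans (le_max_right _ _)
  have hG' : 1 ≤ G := le_max_left _ _
  have hGc : c3 ≤ G := le_max_right _ _
  set K : ℝ := (2 * ‖u‖) ^ k with hK
  have hK' : 0 < K := by positivity
  set r : ℝ := ‖g z0‖ * ‖u‖ / (8 * L1 * K * G) with hrdef
  have hr : 0 < r := by positivity
  have hUr : ∀ᶠ z in nhds z0, ‖z - z0‖ ≤ r := by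
    filter_upwards [closedBall_mem_nhds z0 hr] with p hp
    simpa [dist_eq_norm] using hp
  refine ⟨{a | a ∈ V1 ∧ a ∈ V2 ∧ pV a ∧ ‖a - u‖ ≤ ‖u‖ / 8},
    by filter_upwards [hV1, hV2, hpV, hVu] with a h1 h2 h3 h4 using ⟨h1, h2, h3, h4⟩,
    {z | z ∈ U3 ∧ pU z ∧ ‖g z - g z0‖ ≤ ‖g z0‖ / 2 ∧ ‖z - z0‖ ≤ r ∧
      f z - f z0 = (z - z0) ^ k * g z},
    by filter_upwards [hU3, hpU, hUg, hUr, hfg] with z h1 h2 h3 h4 h5 using ⟨h1, h2, h3, h4, h5⟩, ?_⟩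
  intro T hT
  have hch : ∀ z : ℂ, ∃ (j : ℤ) (a : ℂ), z ∈ T →
      ((a ∈ V1 ∧ a ∈ V2 ∧ pV a ∧ ‖a - u‖ ≤ ‖u‖ / 8) ∧ z - z0 = (2 : ℂ) ^ j * a) := by
    intro z
    by_cases hz : z ∈ T
    · obtain ⟨-, j, a, ha, e⟩ := hT hz
      exact ⟨j, a, fun _ => ⟨ha, e⟩⟩
    · exact ⟨0, 0, fun h => absurd h hz⟩
  choose j a ha using hch
  have hTU : ∀ z ∈ T, z ∈ U3 ∧ pU z ∧ ‖g z - g z0‖ ≤ ‖g z0‖ / 2 ∧ ‖z - z0‖ ≤ r ∧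
      f z - f z0 = (z - z0) ^ k * g z := fun z hz => (hT hz).1
  have hfz : ∀ z ∈ T, f z - f z0 = ((2 : ℂ) ^ j z) ^ k * (a z ^ k * g z) := by
    intro z hz
    rw [(hTU z hz).2.2.2.2, (ha z hz).2, mul_pow, mul_assoc]
  have hdz : ∀ z ∈ T, z - z0 = ((2 : ℂ) ^ j z) ^ 1 * a z := by
    intro z hz
    rw [(ha z hz).2, pow_one]
  have hm : ∀ z ∈ T, ‖a z ^ k * g z - u ^ k * g z0‖ ≤ ‖u ^ k * g z0‖ / 8 := fun z hz =>
    hprod (ha z hz).1.2.2.1 (hTU z hz).2.1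
  have hm1 : ∀ z ∈ T, ‖a z - u‖ ≤ ‖u‖ / 8 := fun z hz => (ha z hz).1.2.2.2
  have hd1 : ∀ z ∈ T, ∀ w ∈ T, dist z w = ‖((2 : ℂ) ^ j z) ^ 1 * a z - ((2 : ℂ) ^ j w) ^ 1 * a w‖ := by
    intro z hz w hw
    rw [← hdz z hz, ← hdz w hw, dist_eq_norm]
    congr 1
    ring
  have hd2 : ∀ z ∈ T, ∀ w ∈ T, dist (f z) (f w) =
      ‖((2 : ℂ) ^ j z) ^ k * (a z ^ k * g z) - ((2 : ℂ) ^ j w) ^ k * (a w ^ k * g w)‖ := by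
    intro z hz w hw
    rw [← hfz z hz, ← hfz w hw, dist_eq_norm]
    congr 1
    ring
  -- comparison inside one piece
  let lam : ℤ → ℝ := fun i => ((2 : ℝ) ^ i) ^ k / (2 : ℝ) ^ i
  have hlam : ∀ i, 0 < lam i := fun i => by positivity
  have hcmp : ∀ z ∈ T, ∀ w ∈ T, j z = j w →
      dist (f z) (f w) ≤ (3 * L1 * ‖g z0‖) * (lam (j z) * dist z w) ∧
      lam (j z) * dist z w ≤ (4 * L1 / ‖g z0‖) * dist (f z) (f w) := by
    intro z hz w hw hj
    set t : ℝ := (2 : ℝ) ^ j z with ht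
    have ht0 : 0 < t := by positivity
    have e1 : dist z w = t * ‖a z - a w‖ := by
      rw [hd1 z hz w hw, ← hj, pow_one, ← mul_sub, norm_mul]
      simp [ht]
    have e2 : dist (f z) (f w) = t ^ k * ‖a z ^ k * g z - a w ^ k * g w‖ := by
      rw [hd2 z hz w hw, ← hj, ← mul_sub, norm_mul]
      simp [ht]
    have e3 : lam (j z) * dist z w = t ^ k * ‖a z - a w‖ := by
      rw [e1]
      simp only [lam, ← ht]
      field_simp
    have b1 : ‖a z ^ k - a w ^ k‖ ≤ L1 * ‖a z - a w‖ :=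
      (hc1 (a z) (ha z hz).1.1 (a w) (ha w hw).1.1).trans (by gcongr)
    have b2 : ‖a z - a w‖ ≤ L1 * ‖a z ^ k - a w ^ k‖ :=
      (hc2 (a z) (ha z hz).1.2.1 (a w) (ha w hw).1.2.1).trans (by gcongr)
    have b3 : ‖g z - g w‖ ≤ G * (t * ‖a z - a w‖) := by
      rw [← e1, dist_eq_norm]
      exact (hc3 z (hTU z hz).1 w (hTU w hw).1).trans (by gcongr)
    have hgz := (hTU z hz).2.2.1
    have g1 : ‖g z‖ ≤ 2 * ‖g z0‖ := by
      have := norm_le_norm_add_norm_sub' (g z) (g z0)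
      linarith
    have g2 : ‖g z0‖ / 2 ≤ ‖g z‖ := by
      have := norm_le_norm_add_norm_sub' (g z0) (g z)
      rw [norm_sub_rev] at this
      linarith
    have u1 : ‖a w ^ k‖ ≤ K := by
      rw [norm_pow, hK]
      gcongr
      have := norm_le_norm_add_norm_sub' (a w) u
      have := hm1 w hw
      linarith
    have u2 : ‖u‖ / 2 ≤ ‖a z‖ := by
      have h1 := norm_le_norm_add_norm_sub' u (a z)
      rw [norm_sub_rev] at h1
      have := hm1 z hz
      linarith
    have tr : t * ‖a z‖ ≤ r := by
      have h1 := (hTU z hz).2.2.2.1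
      rw [(ha z hz).2, norm_mul] at h1
      simpa [ht] using h1
    have err : K * (G * t) ≤ ‖g z0‖ / (4 * L1) := by
      have h1 : t * (‖u‖ / 2) ≤ r := le_trans (by gcongr) tr
      have h2 : t ≤ 2 * r / ‖u‖ := by
        rw [le_div_iff₀ hu']
        linarith
      calc K * (G * t) ≤ K * (G * (2 * r / ‖u‖)) := by gcongr
        _ = ‖g z0‖ / (4 * L1) := by
          rw [hrdef]
          field_simp
          norm_num
    have dec : a z ^ k * g z - a w ^ k * g w =
        (a z ^ k - a w ^ k) * g z + a w ^ k * (g z - g w) := by ring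
    set P := ‖a z - a w‖ with hP
    have hP0 : 0 ≤ P := norm_nonneg _
    have er2 : ‖a w ^ k * (g z - g w)‖ ≤ ‖g z0‖ / (4 * L1) * P := by
      rw [norm_mul]
      calc ‖a w ^ k‖ * ‖g z - g w‖ ≤ K * (G * (t * P)) := by gcongr
        _ = K * (G * t) * P := by ring
        _ ≤ _ := by gcongr
    have q1 : ‖g z0‖ / (4 * L1) ≤ L1 * ‖g z0‖ := by
      rw [div_le_iff₀ (by positivity)]
      have : 1 ≤ L1 * L1 := by nlinarith
      nlinarith
    have up : ‖a z ^ k * g z - a w ^ k * g w‖ ≤ 3 * L1 * ‖g z0‖ * P := by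
      rw [dec]
      refine (norm_add_le _ _).trans ?_
      have h1 : ‖(a z ^ k - a w ^ k) * g z‖ ≤ L1 * P * (2 * ‖g z0‖) := by
        rw [norm_mul]
        gcongr
      have h2 := mul_le_mul_of_nonneg_right q1 hP0
      linarith
    have low : ‖g z0‖ / (4 * L1) * P ≤ ‖a z ^ k * g z - a w ^ k * g w‖ := by
      rw [dec]
      have h1 : P / L1 * (‖g z0‖ / 2) ≤ ‖(a z ^ k - a w ^ k) * g z‖ := by
        rw [norm_mul]
        gcongr
        rw [div_le_iff₀ (by positivity)]
        linarith
      have h2 := norm_sub_le_norm_add (( a z ^ k - a w ^ k) * g z) (a w ^ k * (g z - g w))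
      have h3 : P / L1 * (‖g z0‖ / 2) = 2 * (‖g z0‖ / (4 * L1) * P) := by
        field_simp
        norm_num
      linarith
    rw [e3, e2]
    constructor
    · calc t ^ k * ‖a z ^ k * g z - a w ^ k * g w‖ ≤ t ^ k * (3 * L1 * ‖g z0‖ * P) := by gcongr
        _ = _ := by ring
    · calc t ^ k * P = (4 * L1 / ‖g z0‖) * (t ^ k * (‖g z0‖ / (4 * L1) * P)) := by
            field_simp
        _ ≤ _ := by gcongr
  set L : ℝ := 3 * L1 * ‖g z0‖ + 4 * L1 / ‖g z0‖ + 4 with hL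
  have p1 : 0 < 3 * L1 * ‖g z0‖ := by positivity
  have p2 : 0 < 4 * L1 / ‖g z0‖ := by positivity
  have hL0 : 0 < L := by positivity
  have hL4 : 4 ≤ L := by linarith
  have l1 : 3 * L1 * ‖g z0‖ ≤ L := by linarith
  have l2 : 4 * L1 / ‖g z0‖ ≤ L := by linarith
  have H1 : ∀ z ∈ T, ∀ w ∈ T, j z = j w → dist (f z) (f w) ≤ L * (lam (j z) * dist z w) :=
    fun z hz w hw h => (hcmp z hz w hw h).1.trans
      (mul_le_mul_of_nonneg_right l1 (mul_nonneg (hlam _).le dist_nonneg))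
  have H2 : ∀ z ∈ T, ∀ w ∈ T, j z = j w → lam (j z) * dist z w ≤ L * dist (f z) (f w) :=
    fun z hz w hw h => (hcmp z hz w hw h).2.trans
      (mul_le_mul_of_nonneg_right l2 dist_nonneg)
  rw [CP.image_iff]
  constructor
  · refine CP.glue j lam (fun i => ((2 : ℝ) ^ i) ^ k * ‖u ^ k * g z0‖) L hL0 hlam H1 H2 ?_ ?_ ?_
    · intro z hz w hw h
      refine le_trans ?_ (mul_le_mul_of_nonneg_right hL4 dist_nonneg)
      rw [hd2 z hz w hw]
      exact scale_sep hk h (hm z hz) (hm w hw)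
    · intro z hz w hw h
      refine le_trans ?_ (mul_le_mul_of_nonneg_right hL4 dist_nonneg)
      rw [dist_comm, hd2 w hw z hz]
      exact scale_sep hk h.symm (hm w hw) (hm z hz)
    · intro z hz w hw
      refine le_trans ?_ (mul_le_mul_of_nonneg_right hL4 (by positivity))
      rw [hd2 z hz w hw]
      exact scale_bdd (hm z hz) (hm w hw)
  · refine CP.glue j (fun i => (lam i)⁻¹) (fun i => ((2 : ℝ) ^ i) ^ 1 * ‖u‖) L hL0
      (fun i => inv_pos.2 (hlam i)) ?_ ?_ ?_ ?_ ?_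
    · intro z hz w hw h
      have := H2 z hz w hw h
      have hl := hlam (j z)
      rw [← mul_assoc, mul_comm L, mul_assoc, le_inv_mul_iff₀ hl]
      exact this
    · intro z hz w hw h
      have := H1 z hz w hw h
      have hl := hlam (j z)
      rw [inv_mul_le_iff₀ hl]
      linarith
    · intro z hz w hw h
      refine le_trans ?_ (mul_le_mul_of_nonneg_right hL4 dist_nonneg)
      rw [hd1 z hz w hw]
      exact scale_sep one_ne_zero h (hm1 z hz) (hm1 w hw)
    · intro z hz w hw h
      refine le_trans ?_ (mul_le_mul_of_nonneg_right hL4 dist_nonneg)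
      rw [dist_comm, hd1 w hw z hz]
      exact scale_sep one_ne_zero h.symm (hm1 w hw) (hm1 z hz)
    · intro z hz w hw
      refine le_trans ?_ (mul_le_mul_of_nonneg_right hL4 (by positivity))
      rw [hd1 z hz w hw]
      exact scale_bdd (hm1 z hz) (hm1 w hw)

theorem good_nhds {n : ℕ} {f g : ℂ → ℂ} {z0 : ℂ} {k : ℕ} (hk : k ≠ 0) (hg : AnalyticAt ℂ g z0)
    (hg0 : g z0 ≠ 0) (hfg : ∀ᶠ z in nhds z0, f z - f z0 = (z - z0) ^ k * g z) :
    ∃ U ∈ nhds z0, Good n f U := by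
  let A : Set ℂ := closedBall 0 2 ∩ {z | 1 ≤ ‖z‖}
  have hA : IsCompact A :=
    (isCompact_closedBall 0 2).inter_right (isClosed_le continuous_const continuous_norm)
  have key : ∃ U ∈ nhds z0,
      Good n f {z | z ∈ U ∧ ∃ j : ℤ, ∃ v ∈ A, z - z0 = (2 : ℂ) ^ j * v} := by
    refine hA.induction_on (p := fun V => ∃ U ∈ nhds z0,
      Good n f {z | z ∈ U ∧ ∃ j : ℤ, ∃ v ∈ V, z - z0 = (2 : ℂ) ^ j * v}) ?_ ?_ ?_ ?_
    · refine ⟨univ, Filter.univ_mem, Good.subsingleton ?_⟩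
      rintro z ⟨-, j, v, hv, -⟩
      exact absurd hv (notMem_empty v)
    · rintro V W hVW ⟨U, hU, h⟩
      refine ⟨U, hU, h.mono ?_⟩
      rintro z ⟨hz, j, v, hv, e⟩
      exact ⟨hz, j, v, hVW hv, e⟩
    · rintro V W ⟨U, hU, h⟩ ⟨U', hU', h'⟩
      refine ⟨U ∩ U', Filter.inter_mem hU hU', (h.union h').mono ?_⟩
      rintro z ⟨hz, j, v, hv | hv, e⟩
      · exact Or.inl ⟨hz.1, j, v, hv, e⟩
      · exact Or.inr ⟨hz.2, j, v, hv, e⟩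
    · intro u hu
      have hu0 : u ≠ 0 := by
        rintro rfl
        have : (1 : ℝ) ≤ ‖(0 : ℂ)‖ := hu.2
        norm_num at this
      obtain ⟨V, hV, h⟩ := core (n := n) hk hg hg0 hfg hu0
      exact ⟨V, mem_nhdsWithin_of_mem_nhds hV, h⟩
  obtain ⟨U, hU, h⟩ := key
  refine ⟨U, hU, (h.union (Good.subsingleton (subsingleton_singleton (a := z0)))).mono ?_⟩
  intro z hz
  by_cases h0 : z = z0
  · exact Or.inr h0
  left
  have hpos : 0 < ‖z - z0‖ := norm_pos_iff.2 (sub_ne_zero.2 h0)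
  obtain ⟨j, hj1, hj2⟩ := exists_mem_Ico_zpow hpos (one_lt_two)
  have hp : (0 : ℝ) < 2 ^ j := by positivity
  have hne : (2 : ℂ) ^ j ≠ 0 := zpow_ne_zero _ two_ne_zero
  have hn : ‖(z - z0) / (2 : ℂ) ^ j‖ = ‖z - z0‖ / (2 : ℝ) ^ j := by simp
  refine ⟨hz, j, (z - z0) / (2 : ℂ) ^ j, ⟨?_, ?_⟩, ?_⟩
  · rw [mem_closedBall_zero_iff, hn, div_le_iff₀ hp]
    rw [zpow_add_one₀ two_ne_zero] at hj2
    linarith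
  · change 1 ≤ ‖(z - z0) / (2 : ℂ) ^ j‖
    rw [hn, le_div_iff₀ hp]
    linarith
  · field_simp

/-- **Statement 15.** A non-constant holomorphic function on a planar domain preserves
the Nagata dimension of every subset compactly contained in the domain. -/
theorem holomorphic_preserves_nagataDim_compactly_contained (Ω : Set ℂ) (hΩo : IsOpen Ω)
    (hΩc : IsConnected Ω) (f : ℂ → ℂ) (hf : DifferentiableOn ℂ f Ω)
    (hnc : ¬ ∃ w : ℂ, ∀ z ∈ Ω, f z = w)
    (A : Set ℂ) (hA : closure A ⊆ Ω) (hAc : IsCompact (closure A)) :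
    nagataDim A = nagataDim (f '' A) := by
  have hfa : AnalyticOnNhd ℂ f Ω := hf.analyticOnNhd hΩo
  apply nagataDim_eq_of_CP
  intro n
  have good : Good n f (closure A) := by
    refine hAc.induction_on (p := Good n f) (Good.subsingleton subsingleton_empty)
      (fun s t hst h => h.mono hst) (fun s t h1 h2 => h1.union h2) ?_
    intro z0 hz0
    have hz : z0 ∈ Ω := hA hz0
    have han : AnalyticAt ℂ (fun z => f z - f z0) z0 := (hfa z0 hz).sub analyticAt_const
    have hnz : ¬ ∀ᶠ z in nhds z0, f z - f z0 = 0 := by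
      intro h
      apply hnc
      refine ⟨f z0, ?_⟩
      refine hfa.eqOn_of_preconnected_of_eventuallyEq (g := fun _ => f z0)
        analyticOnNhd_const hΩc.isPreconnected hz ?_
      filter_upwards [h] with z h using sub_eq_zero.1 h
    obtain ⟨k, g, hg, hg0, hfg⟩ := han.exists_eventuallyEq_pow_smul_nonzero_iff.2 hnz
    have hk : k ≠ 0 := by
      rintro rfl
      have := hfg.self_of_nhds
      simp at this
      exact hg0 this.symm
    obtain ⟨U, hU, h⟩ := good_nhds (n := n) hk hg hg0 (by simpa [smul_eq_mul] using hfg)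
    exact ⟨U, mem_nhdsWithin_of_mem_nhds hU, h⟩
  exact good A subset_closure
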